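/- Let G be a group with identity e and let X ⊆ G be a finite set with e ∉ X. Then X is a statistically free set if and only if X ∪ {e} is a statistically Leinert set. -/

import Mathlib

open Filter

/-- The alternating product `x_1⁻¹ x_2 x_3⁻¹ x_4 ⋯ x_{2n-1}⁻¹ x_{2n}` associated to a
string `(x_1, …, x_{2n})` of group elements. -/
def altProd {G : Type*} [Group G] {n : ℕ} (x : Fin (2 * n) → G) : G :=
  (List.ofFn fun i : Fin n =>
    (x ⟨2 * i.val, by have := i.isLt; omega⟩)⁻¹ *
      x ⟨2 * i.val + 1, by have := i.isLt; omega⟩).prod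

/-- `b_{2n}`: the number of bad valid strings of length `2n` over `X`, i.e. sequences
of elements of `X` with adjacent entries distinct whose alternating product is `1`. -/
noncomputable def badValidCount {G : Type*} [Group G] (X : Finset G) (n : ℕ) : ℕ :=
  Nat.card {f : Fin (2 * n) → G //
    (∀ i, f i ∈ X) ∧
    (∀ (i : ℕ) (h : i + 1 < 2 * n), f ⟨i, by omega⟩ ≠ f ⟨i + 1, h⟩) ∧
    altProd f = 1}

/-- `X` is statistically Leinert if `b_{2n} / (s (s-1)^(2n-1)) → 0` where `s = |X|`. -/
def IsStatLeinert {G : Type*} [Group G] (X : Finset G) : Prop :=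
  Tendsto
    (fun n : ℕ => (badValidCount X n : ℝ) /
      ((X.card : ℝ) * ((X.card : ℝ) - 1) ^ (2 * n - 1)))
    atTop (nhds 0)

/-- The number of bad reduced strings of length `n` over `X`: sequences
`((x_1, ε_1), …, (x_n, ε_n))` with `x_i ∈ X`, `ε_i ∈ {-1, 1}` (modelled as `ℤˣ`), such
that for `1 ≤ i < n` either `x_i ≠ x_{i+1}` or `ε_i = ε_{i+1}`, and
`x_1^{ε_1} ⋯ x_n^{ε_n} = 1`. -/
noncomputable def badReducedCount {G : Type*} [Group G] (X : Finset G) (n : ℕ) : ℕ :=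
  Nat.card {p : Fin n → G × ℤˣ //
    (∀ i, (p i).1 ∈ X) ∧
    (∀ (i : ℕ) (h : i + 1 < n),
      (p ⟨i, by omega⟩).1 ≠ (p ⟨i + 1, h⟩).1 ∨ (p ⟨i, by omega⟩).2 = (p ⟨i + 1, h⟩).2) ∧
    (List.ofFn fun i => (p i).1 ^ (((p i).2 : ℤ))).prod = 1}

/-- `X` is statistically free if `b_n / (2s (2s-1)^(n-1)) → 0` where `s = |X|`. -/
def IsStatFree {G : Type*} [Group G] (X : Finset G) : Prop :=
  Tendsto
    (fun n : ℕ => (badReducedCount X n : ℝ) /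
      (2 * (X.card : ℝ) * (2 * (X.card : ℝ) - 1) ^ (n - 1)))
    atTop (nhds 0)


namespace SLF

open scoped Classical in
/-- Normalised count of admissible words of length `n+1` with first letter `a` and product `g`. -/
noncomputable def dens {G A : Type*} [Group G] [Fintype A] (R : A → A → Prop) (φ : A → G) (d : ℝ) :
    ℕ → G → A → ℝ
  | 0, g, a => if g = φ a then 1 else 0
  | n + 1, g, a => d⁻¹ * ∑ b, if R a b then dens R φ d n ((φ a)⁻¹ * g) b else 0

section
variable {G A : Type*} [Group G] [Fintype A] (R : A → A → Prop) (φ : A → G) (d : ℝ)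

lemma dens_nonneg (hd : 0 < d) (n : ℕ) (g : G) (a : A) : 0 ≤ dens R φ d n g a := by
  induction n generalizing g a with
  | zero => simp only [dens]; split_ifs <;> norm_num
  | succ n ih =>
    simp only [dens]
    refine mul_nonneg (by positivity) (Finset.sum_nonneg fun b _ => ?_)
    split_ifs
    · exact ih _ _
    · exact le_rfl

lemma dens_supp (n : ℕ) (a : A) : (Function.support fun g => dens R φ d n g a).Finite := by
  induction n generalizing a with
  | zero =>
    refine (Set.finite_singleton (φ a)).subset ?_
    intro g hg
    simp only [dens, Function.mem_support, ne_eq, ite_eq_right_iff, one_ne_zero, imp_false,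
      not_not] at hg
    exact hg
  | succ n ih =>
    have : (⋃ b : A, (fun g => φ a * g) '' (Function.support fun g => dens R φ d n g b)).Finite :=
      Set.finite_iUnion fun b => (ih b).image _
    refine this.subset ?_
    intro g hg
    simp only [Function.mem_support, dens] at hg
    obtain ⟨b, -, hb⟩ := Finset.exists_ne_zero_of_sum_ne_zero (right_ne_zero_of_mul hg)
    rw [Set.mem_iUnion]
    refine ⟨b, (φ a)⁻¹ * g, ?_, by simp⟩
    split_ifs at hb with h
    · exact hb
    · exact absurd rfl hb

lemma dens_summable (n : ℕ) (a : A) : Summable fun g => dens R φ d n g a :=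
  summable_of_hasFiniteSupport (dens_supp R φ d n a)

lemma dens_sq_summable (n : ℕ) (a : A) : Summable fun g => (dens R φ d n g a) ^ 2 := by
  refine summable_of_hasFiniteSupport ((dens_supp R φ d n a).subset ?_)
  intro g hg
  simpa using hg

open scoped Classical in
lemma dens_total (hd : 0 < d) (hin : ∀ b, ∑ a, (if R a b then (1 : ℝ) else 0) = d) (n : ℕ) :
    ∑ a, ∑' g, dens R φ d n g a = Fintype.card A := by
  induction n with
  | zero => simp [dens]
  | succ n ih =>
    have h1 : ∀ a, ∑' g, dens R φ d (n + 1) g a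
        = d⁻¹ * ∑ b, (if R a b then (1 : ℝ) else 0) * ∑' g, dens R φ d n g b := by
      intro a
      simp only [dens]
      rw [tsum_mul_left, Summable.tsum_finsetSum]
      · congr 1
        refine Finset.sum_congr rfl fun b _ => ?_
        split_ifs
        · rw [one_mul]
          exact (Equiv.mulLeft (φ a)⁻¹).tsum_eq (fun g => dens R φ d n g b)
        · simp
      · intro b _
        split_ifs
        · exact (Equiv.mulLeft (φ a)⁻¹).summable_iff.2 (dens_summable R φ d n b)
        · exact summable_zero
    simp only [h1]
    rw [← Finset.mul_sum, Finset.sum_comm]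
    simp only [← Finset.sum_mul, hin]
    rw [← Finset.mul_sum, ih]
    field_simp

set_option maxHeartbeats 1000000 in
open scoped Classical in
lemma dens_edge (hd : 0 < d) (hin : ∀ b, ∑ a, (if R a b then (1 : ℝ) else 0) = d)
    (hout : ∀ a, ∑ b, (if R a b then (1 : ℝ) else 0) = d) (a b : A) (hab : R a b) (g : G) :
    Tendsto (fun n => dens R φ d n g b - dens R φ d (n + 1) (φ a * g) a) atTop (nhds 0) := by
  set f := dens R φ d with hf
  let E : ℕ → ℝ := fun n => ∑ a, ∑' g, (f n g a) ^ 2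
  have hE0 : ∀ n, 0 ≤ E n := fun n => Finset.sum_nonneg fun a _ => tsum_nonneg fun g => sq_nonneg _
  -- pointwise identity
  have hpt : ∀ n a g, ∑ b, (if R a b then (1 : ℝ) else 0) * (f n ((φ a)⁻¹ * g) b - f (n + 1) g a) ^ 2
      = ∑ b, (if R a b then (1 : ℝ) else 0) * (f n ((φ a)⁻¹ * g) b) ^ 2
        - d * (f (n + 1) g a) ^ 2 := by
    intro n a g
    have h1 : ∑ b, (if R a b then (1 : ℝ) else 0) * (f n ((φ a)⁻¹ * g) b) = d * f (n + 1) g a := by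
      simp only [hf, dens]
      rw [mul_inv_cancel_left₀ hd.ne']
      simp
    have h2 : ∀ b, (if R a b then (1 : ℝ) else 0) * (f n ((φ a)⁻¹ * g) b - f (n + 1) g a) ^ 2
      = (if R a b then (1 : ℝ) else 0) * (f n ((φ a)⁻¹ * g) b) ^ 2
       - 2 * f (n+1) g a * ((if R a b then (1 : ℝ) else 0) * (f n ((φ a)⁻¹ * g) b))
       + (if R a b then (1 : ℝ) else 0) * (f (n + 1) g a) ^ 2 := by intro b; ring
    simp only [h2]
    rw [Finset.sum_add_distrib, Finset.sum_sub_distrib, ← Finset.mul_sum, h1, ← Finset.sum_mul, hout]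
    ring
  have hs1 : ∀ n a b, Summable fun g => (f n ((φ a)⁻¹ * g) b) ^ 2 := fun n a b =>
    (Equiv.mulLeft (φ a)⁻¹).summable_iff.2 (dens_sq_summable R φ d n b)
  have hs2 : ∀ n a, Summable fun g => ∑ b, (if R a b then (1 : ℝ) else 0) * (f n ((φ a)⁻¹ * g) b) ^ 2 :=
    fun n a => summable_sum fun b _ => (hs1 n a b).mul_left _
  have hs3 : ∀ n a, Summable fun g => d * (f (n + 1) g a) ^ 2 := fun n a =>
    (dens_sq_summable R φ d (n+1) a).mul_left _
  have hs4 : ∀ n a, Summable fun g =>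
      ∑ b, (if R a b then (1 : ℝ) else 0) * (f n ((φ a)⁻¹ * g) b - f (n + 1) g a) ^ 2 := by
    intro n a
    simp only [hpt]
    exact (hs2 n a).sub (hs3 n a)
  have htot : ∀ n, ∑ a, ∑' g,
      ∑ b, (if R a b then (1 : ℝ) else 0) * (f n ((φ a)⁻¹ * g) b - f (n + 1) g a) ^ 2
      = d * (E n - E (n + 1)) := by
    intro n
    have h1 : ∀ a, ∑' g,
        ∑ b, (if R a b then (1 : ℝ) else 0) * (f n ((φ a)⁻¹ * g) b - f (n + 1) g a) ^ 2
        = ∑ b, (if R a b then (1 : ℝ) else 0) * ∑' g, (f n g b) ^ 2 - d * ∑' g, (f (n+1) g a) ^ 2 := by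
      intro a
      simp only [hpt]
      rw [(hs2 n a).tsum_sub (hs3 n a), tsum_mul_left, Summable.tsum_finsetSum]
      · congr 1
        refine Finset.sum_congr rfl fun b _ => ?_
        rw [tsum_mul_left]
        congr 1
        exact (Equiv.mulLeft (φ a)⁻¹).tsum_eq (fun g => (f n g b) ^ 2)
      · intro b _
        exact (hs1 n a b).mul_left _
    simp only [h1]
    rw [Finset.sum_sub_distrib, Finset.sum_comm]
    simp only [← Finset.sum_mul, hin, ← Finset.mul_sum]
    simp only [E]; ring
  have hnn : ∀ n a g, 0 ≤ ∑ b, (if R a b then (1 : ℝ) else 0) * (f n ((φ a)⁻¹ * g) b - f (n + 1) g a) ^ 2 := by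
    intro n a g
    refine Finset.sum_nonneg fun b _ => mul_nonneg ?_ (sq_nonneg _)
    split_ifs <;> norm_num
  have hle : ∀ n, (f n g b - f (n + 1) (φ a * g) a) ^ 2 ≤ d * (E n - E (n + 1)) := by
    intro n
    rw [← htot n]
    refine le_trans ?_ (Finset.single_le_sum (f := fun a => ∑' g,
      ∑ b, (if R a b then (1 : ℝ) else 0) * (f n ((φ a)⁻¹ * g) b - f (n + 1) g a) ^ 2)
      (fun a _ => tsum_nonneg fun g => hnn n a g) (Finset.mem_univ a))
    refine le_trans ?_ ((hs4 n a).le_tsum (φ a * g) fun g _ => hnn n a g)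
    refine le_trans ?_ (Finset.single_le_sum (f := fun b => (if R a b then (1 : ℝ) else 0) *
      (f n ((φ a)⁻¹ * (φ a * g)) b - f (n + 1) (φ a * g) a) ^ 2) (fun b _ => mul_nonneg
        (by split_ifs <;> norm_num) (sq_nonneg _)) (Finset.mem_univ b))
    simp [hab]
  have hanti : Antitone E := by
    refine antitone_nat_of_succ_le fun n => ?_
    have := (sq_nonneg _).trans (hle n)
    have := nonneg_of_mul_nonneg_right this hd
    linarith
  have hconv : Tendsto E atTop (nhds (⨅ n, E n)) :=
    tendsto_atTop_ciInf hanti ⟨0, by rintro _ ⟨n, rfl⟩; exact hE0 n⟩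
  have hz : Tendsto (fun n => d * (E n - E (n + 1))) atTop (nhds 0) := by
    have := (hconv.sub ((tendsto_add_atTop_iff_nat 1).2 hconv)).const_mul d
    simpa using this
  have hsq := squeeze_zero (fun n => sq_nonneg _) hle hz
  have h3 := hsq.sqrt
  simp only [Real.sqrt_sq_eq_abs, Real.sqrt_zero] at h3
  exact (tendsto_zero_iff_abs_tendsto_zero _).2 h3

open scoped Classical in
/-- If the generated group is infinite, densities at the identity tend to zero. -/
lemma dens_tendsto (hd : 0 < d) (hin : ∀ b, ∑ a, (if R a b then (1 : ℝ) else 0) = d)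
    (hout : ∀ a, ∑ b, (if R a b then (1 : ℝ) else 0) = d)
    (c1 : ∀ a a', ∃ b, R a b ∧ R a' b) (c2 : ∀ b b', ∃ a, R a b ∧ R a b')
    (c3 : ∀ b, ∃ b', φ b' = (φ b)⁻¹)
    (hinf : Infinite (Subgroup.closure (Set.range φ))) (a : A) (g : G) :
    Tendsto (fun n => dens R φ d n g a) atTop (nhds 0) := by
  set f := dens R φ d with hf
  have edge := dens_edge R φ d hd hin hout
  have e1 : ∀ g b b', Tendsto (fun n => f n g b - f n g b') atTop (nhds 0) := by
    intro g b b'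
    obtain ⟨a, h1, h2⟩ := c2 b b'
    have := (edge a b h1 g).sub (edge a b' h2 g)
    simpa using this
  have e2 : ∀ g a a' b b', Tendsto (fun n => f n (φ a * g) b - f n (φ a' * g) b') atTop (nhds 0) := by
    intro g a a' b b'
    obtain ⟨c, h1, h2⟩ := c1 a a'
    have h := (edge a' c h2 g).sub (edge a c h1 g)
    have h' : Tendsto (fun n => f (n+1) (φ a * g) a - f (n+1) (φ a' * g) a') atTop (nhds 0) := by
      simpa using h
    have h'' := (tendsto_add_atTop_iff_nat (f := fun n => f n (φ a * g) a - f n (φ a' * g) a') 1).1 h'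
    have := ((e1 (φ a * g) b a).add h'').add (e1 (φ a' * g) a' b')
    simpa using this
  let K : Subgroup G :=
    { carrier := {h | ∀ g b b', Tendsto (fun n => f n (h * g) b - f n g b') atTop (nhds 0)}
      one_mem' := by intro g b b'; simpa using e1 g b b'
      mul_mem' := by
        intro x y hx hy g b b'
        have := (hx (y * g) b b).add (hy g b b')
        simpa [mul_assoc] using this
      inv_mem' := by
        intro x hx g b b'
        have := (hx (x⁻¹ * g) b' b).neg
        simpa using this }
  have hK : ∀ a a', φ a * φ a' ∈ K := by
    intro a a' g b b'
    obtain ⟨c, hc⟩ := c3 a'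
    have := e2 (φ a' * g) a c b b'
    rw [hc] at this
    simpa [mul_assoc] using this
  have hKinf : (K : Set G).Infinite := by
    intro hfin
    have hsub : ((Subgroup.closure (Set.range φ) : Subgroup G) : Set G) ⊆
        (K : Set G) ∪ (fun k => φ a * k) '' (K : Set G) := by
      intro x hx
      have step : ∀ c y, y ∈ (K : Set G) ∪ (fun k => φ a * k) '' (K : Set G) →
          φ c * y ∈ (K : Set G) ∪ (fun k => φ a * k) '' (K : Set G) := by
        rintro c y (hy | ⟨k, hk, rfl⟩)
        · right
          obtain ⟨a', ha'⟩ := c3 a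
          refine ⟨φ a' * φ c * y, K.mul_mem (hK _ _) hy, ?_⟩
          simp [ha', mul_assoc]
        · left
          have := K.mul_mem (hK c a) hk
          simpa [mul_assoc] using this
      have hx' : x ∈ Subgroup.closure (Set.range φ) := hx
      induction hx' using Subgroup.closure_induction_left with
      | one => left; exact K.one_mem
      | mul_left y hy z hz ih =>
        obtain ⟨c, rfl⟩ := hy
        exact step c _ (ih hz)
      | inv_mul_cancel y hy z hz ih =>
        obtain ⟨c, rfl⟩ := hy
        obtain ⟨c', hc'⟩ := c3 c
        rw [← hc']
        exact step c' _ (ih hz)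
    have hf2 := (hfin.union (hfin.image _)).subset hsub
    exact hinf.not_finite hf2
  -- conclude
  have hnn := dens_nonneg R φ d hd
  rw [Metric.tendsto_atTop']
  intro ε hε
  obtain ⟨N, hN⟩ := exists_nat_gt ((Fintype.card A : ℝ) / (ε / 2))
  obtain ⟨T, hTK, hTc⟩ := hKinf.exists_subset_card_eq (N + 1)
  have hev : ∀ᶠ n in atTop, ∀ h ∈ T, |f n (h * g) a - f n g a| < ε / 2 := by
    rw [Filter.eventually_all_finset]
    intro h hh
    have := (hTK hh : h ∈ K) g a a
    have := (Metric.tendsto_nhds.1 this) (ε / 2) (by positivity)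
    simpa [Real.dist_eq] using this
  obtain ⟨n0, hn0⟩ := eventually_atTop.1 hev
  refine ⟨n0, fun n hn => ?_⟩
  have hT := hn0 n hn.le
  rw [Real.dist_eq, sub_zero, abs_of_nonneg (hnn n g a)]
  by_contra hcon
  push Not at hcon
  have h1 : ∀ h ∈ T, ε / 2 ≤ f n (h * g) a := by
    intro h hh
    have := (abs_lt.1 (hT h hh)).1
    linarith
  have h2 : (T.card : ℝ) * (ε / 2) ≤ ∑ h ∈ T, f n (h * g) a := by
    have := Finset.card_nsmul_le_sum T _ _ h1
    simpa using this
  have h3 : ∑ h ∈ T, f n (h * g) a ≤ ∑' h, f n (h * g) a :=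
    Summable.sum_le_tsum T (fun h _ => hnn n _ a)
      ((Equiv.mulRight g).summable_iff.2 (dens_summable R φ d n a))
  have h4 : ∑' h, f n (h * g) a = ∑' h, f n h a := (Equiv.mulRight g).tsum_eq (fun h => f n h a)
  have h5 : ∑' h, f n h a ≤ Fintype.card A := by
    rw [← dens_total R φ d hd hin n]
    exact Finset.single_le_sum (f := fun a => ∑' h, f n h a)
      (fun a _ => tsum_nonneg fun h => hnn n h a) (Finset.mem_univ a)
  rw [hTc, div_lt_iff₀ (by positivity)] at *
  push_cast at h2
  nlinarith

open scoped Classical in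
/-- If the generated group is finite, densities at the identity do not all tend to zero. -/
lemma dens_not_tendsto [Nonempty A] (hd : 0 < d)
    (hin : ∀ b, ∑ a, (if R a b then (1 : ℝ) else 0) = d)
    (c4 : ∀ b, ∃ B : Set A, (∀ a ∈ B, R a b) ∧ (∀ a ∈ B, ∀ a' ∈ B, R a a') ∧
      Subgroup.closure (Set.range φ) ≤ Subgroup.closure (φ '' B))
    (hfin : Finite (Subgroup.closure (Set.range φ)))
    (h0 : ∀ a, Tendsto (fun n => dens R φ d n 1 a) atTop (nhds 0)) : False := by
  set f := dens R φ d with hf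
  have hnn := dens_nonneg R φ d hd
  set H := Subgroup.closure (Set.range φ) with hH
  have step : ∀ a b, R a b → ∀ n g, d⁻¹ * f n g b ≤ f (n + 1) (φ a * g) a := by
    intro a b hab n g
    simp only [hf, dens]
    refine mul_le_mul_of_nonneg_left ?_ (by positivity)
    refine le_trans ?_ (Finset.single_le_sum (f := fun b => if R a b then
      dens R φ d n ((φ a)⁻¹ * (φ a * g)) b else 0) (fun b _ => ?_) (Finset.mem_univ b))
    · simp [hab]
    · split_ifs
      · exact hnn _ _ _
      · exact le_rfl
  have hall : ∀ b, ∀ g ∈ H, Tendsto (fun n => f n g b) atTop (nhds 0) := by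
    intro b g hg
    obtain ⟨B, hB1, hB2, hB3⟩ := c4 b
    have hBH : φ '' B ⊆ H := by
      rintro _ ⟨a, _, rfl⟩
      exact Subgroup.subset_closure ⟨a, rfl⟩
    have hmon : ∀ h ∈ Submonoid.closure (φ '' B), ∃ m : ℕ, ∃ c : ℝ, 0 < c ∧ ∃ b', (b' = b ∨ b' ∈ B) ∧
        ∀ n g, c * f n g b ≤ f (n + m) (h * g) b' := by
      intro h hh
      induction hh using Submonoid.closure_induction_left with
      | one => exact ⟨0, 1, one_pos, b, Or.inl rfl, fun n g => by simp⟩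
      | mul_left x hx y hy ih =>
        obtain ⟨a, ha, rfl⟩ := hx
        obtain ⟨m, c, hc, b', hb', hle⟩ := ih
        have hab : R a b' := by
          rcases hb' with rfl | hb'
          · exact hB1 a ha
          · exact hB2 a ha b' hb'
        refine ⟨m + 1, d⁻¹ * c, by positivity, a, Or.inr ha, fun n g => ?_⟩
        have := step a b' hab (n + m) (y * g)
        have h2 := mul_le_mul_of_nonneg_left (hle n g) (inv_nonneg.2 hd.le)
        rw [← mul_assoc] at h2
        rw [← mul_assoc] at this
        exact h2.trans this
    have hginv : g⁻¹ ∈ Submonoid.closure (φ '' B) := by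
      have h1 : g⁻¹ ∈ Subgroup.closure (φ '' B) := hB3 (H.inv_mem hg)
      have hfo : ∀ x ∈ φ '' B, IsOfFinOrder x := by
        intro x hx
        have : IsOfFinOrder (⟨x, hBH hx⟩ : H) := isOfFinOrder_of_finite _
        exact H.subtype.isOfFinOrder this
      have h2 : ∀ x ∈ Subgroup.closure (φ '' B), x ∈ Submonoid.closure (φ '' B) := by
        intro x hx
        induction hx using Subgroup.closure_induction_left with
        | one => exact one_mem _
        | mul_left y hy z hz ih => exact mul_mem (Submonoid.subset_closure hy) ih
        | inv_mul_cancel y hy z hz ih =>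
          refine mul_mem ?_ ih
          have : y⁻¹ ∈ Submonoid.powers y := by
            rw [(hfo y hy).mem_powers_iff_mem_zpowers]
            exact inv_mem (Subgroup.mem_zpowers y)
          obtain ⟨k, hk⟩ := this
          rw [← hk]
          exact pow_mem (Submonoid.subset_closure hy) k
      exact h2 _ h1
    obtain ⟨m, c, hc, b', -, hle⟩ := hmon _ hginv
    have h1 : ∀ n, f n g b ≤ c⁻¹ * f (n + m) 1 b' := by
      intro n
      have := hle n g
      rw [inv_mul_cancel] at this
      rw [← div_eq_inv_mul, le_div_iff₀ hc]
      linarith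
    refine squeeze_zero (fun n => hnn n g b) h1 ?_
    have := ((tendsto_add_atTop_iff_nat m).2 (h0 b')).const_mul c⁻¹
    simpa using this
  have hsupp : ∀ n g b, g ∉ H → f n g b = 0 := by
    intro n
    induction n with
    | zero =>
      intro g b hg
      simp only [hf, dens]
      rw [if_neg]
      rintro rfl
      exact hg (Subgroup.subset_closure ⟨b, rfl⟩)
    | succ n ih =>
      intro g a hg
      simp only [hf, dens]
      rw [Finset.sum_eq_zero, mul_zero]
      intro b _
      split_ifs
      · refine ih _ _ fun hh => hg ?_
        have := H.mul_mem (Subgroup.subset_closure ⟨a, rfl⟩ : φ a ∈ H) hh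
        simpa using this
      · rfl
  have hHfin : (H : Set G).Finite := hfin
  have hsum : ∀ n, ∑ a, ∑ g ∈ hHfin.toFinset, f n g a = Fintype.card A := by
    intro n
    rw [← dens_total R φ d hd hin n]
    refine Finset.sum_congr rfl fun a _ => ?_
    rw [tsum_eq_sum]
    intro g hg
    exact hsupp n g a (by simpa using hg)
  have ht : Tendsto (fun n => ∑ a, ∑ g ∈ hHfin.toFinset, f n g a) atTop (nhds 0) := by
    have : Tendsto (fun n => ∑ a, ∑ g ∈ hHfin.toFinset, f n g a) atTop
        (nhds (∑ a : A, ∑ g ∈ hHfin.toFinset, (0 : ℝ))) := by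
      refine tendsto_finsetSum _ fun a _ => tendsto_finsetSum _ fun g hg => hall a g ?_
      simpa using hg
    simpa using this
  have := tendsto_nhds_unique ht ((tendsto_congr hsum).2 tendsto_const_nhds)
  exact absurd this.symm (Nat.cast_ne_zero.2 Fintype.card_ne_zero)

open scoped Classical in
/-- Degenerate case: the only allowed words are powers of a letter. -/
lemma dens_power (hR : ∀ a b, R a b ↔ a = b)
    (hgen : ∀ a, Subgroup.closure (Set.range φ) ≤ Subgroup.zpowers (φ a))
    (hinf : Infinite (Subgroup.closure (Set.range φ))) (n : ℕ) (a : A) : dens R φ d n 1 a = 0 := by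
  have key : ∀ n g a, g ≠ φ a ^ (n + 1) → dens R φ d n g a = 0 := by
    intro n
    induction n with
    | zero => intro g a hg; simp only [dens]; rw [if_neg]; simpa using hg
    | succ n ih =>
      intro g a hg
      simp only [dens]
      rw [Finset.sum_eq_zero, mul_zero]
      intro b _
      split_ifs with h
      · obtain rfl := (hR a b).1 h
        refine ih _ _ fun hh => hg ?_
        rw [pow_succ', ← hh]; simp
      · rfl
  refine key n 1 a fun h => ?_
  have hfo : IsOfFinOrder (φ a) := isOfFinOrder_iff_pow_eq_one.2 ⟨n + 1, by omega, h.symm⟩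
  have : ((Subgroup.zpowers (φ a) : Subgroup G) : Set G).Finite := by
    have := hfo.finite_zpowers
    exact this
  exact hinf.not_finite (this.subset (hgen a))

end
end SLF

namespace SLF

section
variable {G A : Type*} [Group G] [Fintype A] (R : A → A → Prop) (φ : A → G)

/-- Admissible words. -/
def Chain {n : ℕ} (p : Fin n → A) : Prop :=
  ∀ (i : ℕ) (h : i + 1 < n), R (p ⟨i, by omega⟩) (p ⟨i + 1, h⟩)

lemma chain_cons {n : ℕ} (a : A) (q : Fin (n + 1) → A) :
    Chain R (Fin.cons a q : Fin (n + 2) → A) ↔ R a (q 0) ∧ Chain R q := by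
  constructor
  · intro h
    have h0 : R a (q 0) := by simpa using h 0 (by omega)
    exact ⟨h0, fun i hi => h (i + 1) (by omega)⟩
  · rintro ⟨h0, h1⟩ i hi
    cases i with
    | zero => exact h0
    | succ i => exact h1 i (by omega)

open scoped Classical in
lemma count_eq (d : ℝ) (hd : 0 < d) (n : ℕ) (g : G) (a : A) :
    ∑ p : Fin (n + 1) → A, (if Chain R p ∧ (List.ofFn fun i => φ (p i)).prod = g ∧ p 0 = a
      then (1 : ℝ) else 0) = d ^ n * dens R φ d n g a := by
  induction n generalizing g a with
  | zero =>
    rw [← (Equiv.funUnique (Fin 1) A).symm.sum_comp]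
    have h : ∀ x : A, Chain R ((Equiv.funUnique (Fin 1) A).symm x) := by
      intro x i hi; omega
    have h2 : ∀ x : A, (if Chain R ((Equiv.funUnique (Fin 1) A).symm x) ∧
        (List.ofFn fun i => φ ((Equiv.funUnique (Fin 1) A).symm x i)).prod = g ∧
        (Equiv.funUnique (Fin 1) A).symm x 0 = a then (1 : ℝ) else 0)
        = if x = a then (if g = φ a then 1 else 0) else 0 := by
      intro x
      by_cases hx : x = a
      · subst hx
        have h' : Chain R (uniqueElim x : Fin 1 → A) := h x
        simp [h', eq_comm]
      · simp [hx]
    refine (Finset.sum_congr rfl fun x _ => h2 x).trans ?_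
    simp [dens]
  | succ n ih =>
    rw [← (Fin.consEquiv (fun _ : Fin (n + 2) => A)).sum_comp, Fintype.sum_prod_type]
    have h1 : ∀ (x : A) (q : Fin (n + 1) → A),
        (if Chain R (Fin.consEquiv (fun _ : Fin (n + 2) => A) (x, q)) ∧
          (List.ofFn fun i => φ (Fin.consEquiv (fun _ : Fin (n + 2) => A) (x, q) i)).prod = g ∧
          Fin.consEquiv (fun _ : Fin (n + 2) => A) (x, q) 0 = a then (1 : ℝ) else 0)
        = if x = a then ∑ b, (if R a b then (if Chain R q ∧ (List.ofFn fun i => φ (q i)).prod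
            = (φ a)⁻¹ * g ∧ q 0 = b then (1 : ℝ) else 0) else 0) else 0 := by
      intro x q
      have hc : (Fin.consEquiv (fun _ : Fin (n + 2) => A) (x, q)) = (Fin.cons x q : Fin (n + 2) → A) := rfl
      rw [hc, chain_cons, List.ofFn_succ]
      by_cases hx : x = a
      · subst hx
        rw [if_pos rfl, Finset.sum_eq_single (q 0)]
        · by_cases hR : R x (q 0)
          · simp only [Fin.cons_zero, Fin.cons_succ, List.prod_cons, hR, true_and, and_true, if_true]
            simp only [eq_inv_mul_iff_mul_eq]
          · simp [hR]
        · intro b _ hb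
          simp [hb.symm]
        · simp
      · simp [hx]
    simp only [h1]
    rw [Finset.sum_comm]
    simp only [Finset.sum_ite_eq', Finset.mem_univ, if_true]
    rw [Finset.sum_comm]
    have h2 : ∀ b, ∑ q : Fin (n + 1) → A, (if R a b then (if Chain R q ∧
        (List.ofFn fun i => φ (q i)).prod = (φ a)⁻¹ * g ∧ q 0 = b then (1 : ℝ) else 0) else 0)
        = d ^ n * (if R a b then dens R φ d n ((φ a)⁻¹ * g) b else 0) := by
      intro b
      split_ifs
      · exact ih _ _
      · simp
    simp only [h2]
    rw [← Finset.mul_sum]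
    simp only [dens]
    field_simp
    ring

lemma card_eq (d : ℝ) (hd : 0 < d) (n : ℕ) :
    (Nat.card {p : Fin (n + 1) → A // Chain R p ∧ (List.ofFn fun i => φ (p i)).prod = 1} : ℝ)
      = d ^ n * ∑ a, dens R φ d n 1 a := by
  classical
  rw [Nat.card_eq_fintype_card, Fintype.card_subtype, Finset.card_filter]
  push_cast
  rw [Finset.mul_sum]
  simp only [← count_eq R φ d hd]
  rw [Finset.sum_comm]
  refine Finset.sum_congr rfl fun p _ => ?_
  rw [Finset.sum_eq_single (p 0)]
  · simp
  · intro b _ hb; simp [hb.symm]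
  · simp

lemma tendsto_iff (d : ℝ) (hd : 0 < d) [Nonempty A] (b : ℕ → ℕ) (D : ℕ → ℝ)
    (hb : ∀ n, b (n + 1) =
      Nat.card {p : Fin (n + 1) → A // Chain R p ∧ (List.ofFn fun i => φ (p i)).prod = 1})
    (hD : ∀ n, D (n + 1) = Fintype.card A * d ^ n) :
    Tendsto (fun n => (b n : ℝ) / D n) atTop (nhds 0) ↔
      ∀ a, Tendsto (fun n => dens R φ d n 1 a) atTop (nhds 0) := by
  have hA : (0 : ℝ) < Fintype.card A := Nat.cast_pos.2 Fintype.card_pos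
  rw [← tendsto_add_atTop_iff_nat 1]
  have h1 : ∀ n, (b (n + 1) : ℝ) / D (n + 1) = (Fintype.card A : ℝ)⁻¹ * ∑ a, dens R φ d n 1 a := by
    intro n
    rw [hb, hD, card_eq R φ d hd]
    field_simp
  simp only [h1]
  constructor
  · intro h a
    have h2 := h.const_mul (Fintype.card A : ℝ)
    simp only [mul_zero, mul_inv_cancel_left₀ hA.ne'] at h2
    refine squeeze_zero (fun n => dens_nonneg R φ d hd n 1 a) (fun n => ?_) h2
    exact Finset.single_le_sum (f := fun a => dens R φ d n 1 a)
      (fun a _ => dens_nonneg R φ d hd n 1 a) (Finset.mem_univ a)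
  · intro h
    have : Tendsto (fun n => (Fintype.card A : ℝ)⁻¹ * ∑ a, dens R φ d n 1 a) atTop
        (nhds ((Fintype.card A : ℝ)⁻¹ * ∑ a : A, (0 : ℝ))) :=
      (tendsto_finsetSum _ fun a _ => h a).const_mul _
    simpa using this

open scoped Classical in
lemma main_abs (d : ℝ) (hd : 0 < d) [Nonempty A] (b : ℕ → ℕ) (D : ℕ → ℝ)
    (hb : ∀ n, b (n + 1) =
      Nat.card {p : Fin (n + 1) → A // Chain R p ∧ (List.ofFn fun i => φ (p i)).prod = 1})
    (hD : ∀ n, D (n + 1) = Fintype.card A * d ^ n)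
    (hin : ∀ b, ∑ a, (if R a b then (1 : ℝ) else 0) = d)
    (hout : ∀ a, ∑ b, (if R a b then (1 : ℝ) else 0) = d)
    (c3 : ∀ b, ∃ b', φ b' = (φ b)⁻¹)
    (c4 : ∀ b, ∃ B : Set A, (∀ a ∈ B, R a b) ∧ (∀ a ∈ B, ∀ a' ∈ B, R a a') ∧
      Subgroup.closure (Set.range φ) ≤ Subgroup.closure (φ '' B))
    (hor : ((∀ a a', ∃ b, R a b ∧ R a' b) ∧ (∀ b b', ∃ a, R a b ∧ R a b')) ∨
      ((∀ a b, R a b ↔ a = b) ∧ ∀ a, Subgroup.closure (Set.range φ) ≤ Subgroup.zpowers (φ a)))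
    (H : Subgroup G) (hH : Subgroup.closure (Set.range φ) = H) :
    Tendsto (fun n => (b n : ℝ) / D n) atTop (nhds 0) ↔ Infinite H := by
  subst hH
  rw [tendsto_iff R φ d hd b D hb hD]
  constructor
  · intro h
    rw [← not_finite_iff_infinite]
    intro hf
    exact dens_not_tendsto R φ d hd hin c4 hf h
  · intro h a
    rcases hor with ⟨c1, c2⟩ | ⟨h1, h2⟩
    · exact dens_tendsto R φ d hd hin hout c1 c2 c3 h a 1
    · simp only [dens_power R φ d h1 h2 h]
      exact tendsto_const_nhds

end

/-! ### Reduced strings -/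

section
variable {G : Type*} [Group G]

abbrev LetR (X : Finset G) := {x // x ∈ X} × ℤˣ

def relR (X : Finset G) (a b : LetR X) : Prop := a.1 ≠ b.1 ∨ a.2 = b.2

def labR (X : Finset G) (a : LetR X) : G := (a.1 : G) ^ ((a.2 : ℤˣ) : ℤ)

lemma badReduced_eq (X : Finset G) (n : ℕ) : badReducedCount X n =
    Nat.card {p : Fin n → LetR X // Chain (relR X) p ∧ (List.ofFn fun i => labR X (p i)).prod = 1} := by
  refine Nat.card_congr
    { toFun := fun p => ⟨fun i => (⟨(p.1 i).1, p.2.1 i⟩, (p.1 i).2), ?_, p.2.2.2⟩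
      invFun := fun p => ⟨fun i => ((p.1 i).1.1, (p.1 i).2), fun i => (p.1 i).1.2, ?_, p.2.2⟩
      left_inv := fun p => rfl
      right_inv := fun p => rfl }
  · intro i hi
    rcases p.2.2.1 i hi with h | h
    · left; intro h'; exact h (congrArg Subtype.val h')
    · right; exact h
  · intro i hi
    rcases p.2.1 i hi with h | h
    · left; intro h'; exact h (Subtype.ext h')
    · right; exact h

lemma relR_iff (X : Finset G) (a b : LetR X) : relR X a b ↔ b ≠ (a.1, -a.2) := by
  unfold relR
  have hp : b ≠ (a.1, -a.2) ↔ ¬ b.1 = a.1 ∨ ¬ b.2 = -a.2 := by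
    rw [← not_and_or, ← Prod.ext_iff (y := (a.1, -a.2))]
  rw [hp]
  have : a.2 = b.2 ↔ ¬ b.2 = -a.2 := by
    rcases Int.units_eq_one_or a.2 with h | h <;> rcases Int.units_eq_one_or b.2 with h' | h' <;>
      rw [h, h'] <;> decide
  rw [this, ne_comm]

lemma relR_symm (X : Finset G) (a b : LetR X) : relR X a b ↔ relR X b a := by
  unfold relR
  rw [ne_comm, eq_comm (a := a.2)]

lemma cardR (X : Finset G) : Fintype.card (LetR X) = 2 * X.card := by
  simp [LetR, mul_comm]

open scoped Classical in
lemma outR (X : Finset G) (a : LetR X) :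
    ∑ b, (if relR X a b then (1 : ℝ) else 0) = 2 * (X.card : ℝ) - 1 := by
  have : ∀ b, (if relR X a b then (1 : ℝ) else 0) = 1 - if b = (a.1, -a.2) then 1 else 0 := by
    intro b
    rw [relR_iff]
    by_cases h : b = (a.1, -a.2) <;> simp [h]
  simp only [this]
  rw [Finset.sum_sub_distrib, Finset.sum_ite_eq' ]
  simp only [Finset.sum_const, Finset.card_univ, cardR]
  simp

lemma closR (X : Finset G) : Subgroup.closure (Set.range (labR X)) = Subgroup.closure (X : Set G) := by
  apply le_antisymm
  · rw [Subgroup.closure_le]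
    rintro _ ⟨a, rfl⟩
    exact zpow_mem (Subgroup.subset_closure a.1.2) _
  · rw [Subgroup.closure_le]
    intro x hx
    refine Subgroup.subset_closure ⟨(⟨x, hx⟩, 1), ?_⟩
    simp [labR]

lemma free_iff (X : Finset G) (hX : X.Nonempty) :
    IsStatFree X ↔ Infinite (Subgroup.closure (X : Set G)) := by
  classical
  have hc : (1 : ℝ) ≤ X.card := by exact_mod_cast hX.card_pos
  obtain ⟨x0, hx0⟩ := hX
  have : Nonempty (LetR X) := ⟨(⟨x0, hx0⟩, 1)⟩
  unfold IsStatFree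
  refine main_abs (relR X) (labR X) (2 * (X.card : ℝ) - 1) (by linarith) (badReducedCount X) _
    (fun n => badReduced_eq X (n + 1)) ?_ ?_ (fun a => ?_) ?_ ?_ ?_ _ (closR X)
  · intro n
    rw [cardR]
    simp
  · intro b
    simp only [fun a => relR_symm X a b]
    convert outR X b
  · convert outR X a
  · intro b
    refine ⟨(b.1, -b.2), ?_⟩
    simp [labR]
  · intro b
    refine ⟨{a | a.2 = b.2}, fun a ha => Or.inr ha, fun a ha a' ha' => Or.inr (ha.trans ha'.symm), ?_⟩
    rw [closR, Subgroup.closure_le]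
    intro x hx
    have h1 : labR X (⟨x, hx⟩, b.2) ∈ Subgroup.closure (labR X '' {a | a.2 = b.2}) :=
      Subgroup.subset_closure ⟨(⟨x, hx⟩, b.2), rfl, rfl⟩
    have h2 : labR X (⟨x, hx⟩, b.2) = x ^ ((b.2 : ℤˣ) : ℤ) := rfl
    rw [h2] at h1
    rcases Int.units_eq_one_or b.2 with h | h
    · simpa [h] using h1
    · simpa [h] using h1
  · by_cases h2 : X.card = 1
    · right
      have hs : ∀ x y : {x // x ∈ X}, x = y := by
        intro x y
        exact Subtype.ext (Finset.card_le_one.1 h2.le _ x.2 _ y.2)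
      constructor
      · intro a b
        unfold relR
        constructor
        · rintro (h | h)
          · exact absurd (hs _ _) h
          · exact Prod.ext (hs _ _) h
        · rintro rfl; exact Or.inr rfl
      · intro a
        rw [closR, Subgroup.closure_le]
        intro x hx
        have : x = a.1.1 := congrArg Subtype.val (hs ⟨x, hx⟩ a.1)
        rw [this]
        unfold labR
        rcases Int.units_eq_one_or a.2 with h | h
        · simp [h]
        · simp [h]
    · left
      have hlt : 1 < X.card := by
        have : 1 ≤ X.card := by exact_mod_cast hc
        omega
      have key : ∀ a a' : LetR X, ∃ b, relR X a b ∧ relR X a' b := by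
        intro a a'
        obtain ⟨z, hz, hne⟩ := Finset.exists_mem_ne hlt a'.1.1
        exact ⟨(⟨z, hz⟩, a.2), Or.inr rfl, Or.inl fun h => hne (congrArg Subtype.val h).symm⟩
      refine ⟨key, fun b b' => ?_⟩
      obtain ⟨a, h1, h2⟩ := key b b'
      exact ⟨a, (relR_symm X _ _).1 h1, (relR_symm X _ _).1 h2⟩

end

/-! ### Valid strings -/

section
variable {G : Type*} [Group G]

abbrev LetL (Y : Finset G) := {p : {x // x ∈ Y} × {x // x ∈ Y} // p.1 ≠ p.2}

def relL (Y : Finset G) (a b : LetL Y) : Prop := a.1.2 ≠ b.1.1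

def labL (Y : Finset G) (a : LetL Y) : G := (a.1.1 : G)⁻¹ * (a.1.2 : G)

lemma badValid_eq (Y : Finset G) (n : ℕ) : badValidCount Y n =
    Nat.card {p : Fin n → LetL Y // Chain (relL Y) p ∧ (List.ofFn fun i => labL Y (p i)).prod = 1} := by
  refine Nat.card_congr
    { toFun := fun f => ⟨fun i => ⟨(⟨f.1 ⟨2 * i.val, by omega⟩, f.2.1 _⟩,
          ⟨f.1 ⟨2 * i.val + 1, by omega⟩, f.2.1 _⟩), ?_⟩, ?_, f.2.2.2⟩
      invFun := fun p => ⟨fun j => if j.val % 2 = 0 then ((p.1 ⟨j.val / 2, by omega⟩).1.1 : G)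
          else ((p.1 ⟨j.val / 2, by omega⟩).1.2 : G), ?_, ?_, ?_⟩
      left_inv := ?_
      right_inv := ?_ }
  · intro h
    exact f.2.2.1 (2 * i.val) (by omega) (congrArg Subtype.val h)
  · intro i hi h
    exact f.2.2.1 (2 * i + 1) (by omega) (congrArg Subtype.val h)
  · intro j
    dsimp only
    split_ifs
    · exact (p.1 _).1.1.2
    · exact (p.1 _).1.2.2
  · intro i hi
    dsimp only
    rcases Nat.even_or_odd' i with ⟨k, rfl | rfl⟩
    · have e1 : (2 * k) / 2 = k := by omega
      have e2 : (2 * k + 1) / 2 = k := by omega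
      have e3 : (2 * k) % 2 = 0 := by omega
      have e4 : ¬ (2 * k + 1) % 2 = 0 := by omega
      simp only [e1, e2, if_pos e3, if_neg e4]
      intro h
      exact (p.1 _).2 (Subtype.ext h)
    · have e1 : (2 * k + 1) / 2 = k := by omega
      have e2 : (2 * k + 1 + 1) / 2 = k + 1 := by omega
      have e3 : (2 * k + 1 + 1) % 2 = 0 := by omega
      have e4 : ¬ (2 * k + 1) % 2 = 0 := by omega
      simp only [e1, e2, if_pos e3, if_neg e4]
      intro h
      exact p.2.1 k (by omega) (Subtype.ext h)
  · have h := p.2.2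
    unfold altProd
    refine Eq.trans ?_ h
    congr 2
    funext i
    have e1 : (2 * i.val) / 2 = i.val := by omega
    have e2 : (2 * i.val + 1) / 2 = i.val := by omega
    have e3 : (2 * i.val) % 2 = 0 := by omega
    have e4 : ¬ (2 * i.val + 1) % 2 = 0 := by omega
    simp only [e1, e2, if_pos e3, if_neg e4]
    rfl
  · intro f
    apply Subtype.ext
    funext j
    dsimp only
    split_ifs with h
    · exact congrArg f.1 (Fin.ext (by dsimp only; omega))
    · exact congrArg f.1 (Fin.ext (by dsimp only; omega))
  · intro p
    apply Subtype.ext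
    funext i
    apply Subtype.ext
    have e1 : (2 * i.val) / 2 = i.val := by omega
    have e2 : (2 * i.val + 1) / 2 = i.val := by omega
    have e3 : (2 * i.val) % 2 = 0 := by omega
    have e4 : ¬ (2 * i.val + 1) % 2 = 0 := by omega
    apply Prod.ext
    · apply Subtype.ext
      simp only [e1, if_pos e3]
    · apply Subtype.ext
      simp only [e2, if_neg e4]

open scoped Classical in
lemma sumL (Y : Finset G) (F : {x // x ∈ Y} → {x // x ∈ Y} → ℝ) :
    ∑ b : LetL Y, F b.1.1 b.1.2 = ∑ x, ∑ y, if x ≠ y then F x y else 0 := by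
  rw [← Fintype.sum_prod_type' (f := fun x y => if x ≠ y then F x y else 0), ← Finset.sum_filter]
  exact (Finset.sum_subtype _ (by simp) (fun p : {x // x ∈ Y} × {x // x ∈ Y} => F p.1 p.2)).symm

open scoped Classical in
lemma sumNe (Y : Finset G) (x : {x // x ∈ Y}) :
    ∑ y, (if x ≠ y then (1 : ℝ) else 0) = (Y.card : ℝ) - 1 := by
  have : ∀ y, (if x ≠ y then (1 : ℝ) else 0) = 1 - if x = y then 1 else 0 := by
    intro y
    by_cases h : x = y <;> simp [h]
  simp only [this]
  rw [Finset.sum_sub_distrib, Finset.sum_ite_eq]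
  simp

open scoped Classical in
lemma cardL (Y : Finset G) : (Fintype.card (LetL Y) : ℝ) = Y.card * ((Y.card : ℝ) - 1) := by
  have := sumL Y (fun _ _ => 1)
  simp only [sumNe] at this
  rw [Finset.sum_const, Finset.sum_const, Finset.card_univ, Finset.card_univ, Fintype.card_coe,
    nsmul_eq_mul, nsmul_eq_mul, mul_one] at this
  convert this

open scoped Classical in
lemma outL (Y : Finset G) (a : LetL Y) :
    ∑ b, (if relL Y a b then (1 : ℝ) else 0) = ((Y.card : ℝ) - 1) ^ 2 := by
  unfold relL
  refine Eq.trans (Eq.trans (Finset.sum_congr rfl fun b _ => ?_)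
    (sumL Y (fun x _ => if a.1.2 ≠ x then 1 else 0))) ?_
  · congr
  have : ∀ x, ∑ y, (if x ≠ y then (if a.1.2 ≠ x then (1 : ℝ) else 0) else 0)
      = (if a.1.2 ≠ x then (1 : ℝ) else 0) * ((Y.card : ℝ) - 1) := by
    intro x
    rw [← sumNe Y x, Finset.mul_sum]
    refine Finset.sum_congr rfl fun y _ => ?_
    split_ifs <;> simp
  simp only [this]
  rw [← Finset.sum_mul, sumNe]
  ring

open scoped Classical in
lemma inL (Y : Finset G) (b : LetL Y) :
    ∑ a, (if relL Y a b then (1 : ℝ) else 0) = ((Y.card : ℝ) - 1) ^ 2 := by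
  unfold relL
  refine Eq.trans (Eq.trans (Finset.sum_congr rfl fun b _ => ?_)
    (sumL Y (fun _ y => if y ≠ b.1.1 then 1 else 0))) ?_
  · congr
  rw [Finset.sum_comm]
  have : ∀ y, ∑ x, (if x ≠ y then (if y ≠ b.1.1 then (1 : ℝ) else 0) else 0)
      = (if b.1.1 ≠ y then (1 : ℝ) else 0) * ((Y.card : ℝ) - 1) := by
    intro y
    rw [← sumNe Y y, Finset.mul_sum]
    refine Finset.sum_congr rfl fun x _ => ?_
    have hx : (y = x) = (x = y) := propext eq_comm
    have hy : (b.1.1 = y) = (y = b.1.1) := propext eq_comm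
    simp only [ne_eq, hx, hy]
    split_ifs <;> simp
  simp only [this]
  rw [← Finset.sum_mul, sumNe]
  ring

lemma closL (Y : Finset G) (h1 : (1 : G) ∈ Y) :
    Subgroup.closure (Set.range (labL Y)) = Subgroup.closure (Y : Set G) := by
  apply le_antisymm
  · rw [Subgroup.closure_le]
    rintro _ ⟨a, rfl⟩
    exact mul_mem (inv_mem (Subgroup.subset_closure a.1.1.2)) (Subgroup.subset_closure a.1.2.2)
  · rw [Subgroup.closure_le]
    intro x hx
    by_cases h : x = 1
    · rw [h]; exact one_mem _
    · refine Subgroup.subset_closure ⟨⟨(⟨1, h1⟩, ⟨x, hx⟩), fun h' => h (congrArg Subtype.val h').symm⟩, ?_⟩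
      simp [labL]

lemma leinert_iff (Y : Finset G) (h1 : (1 : G) ∈ Y) (hY : 1 < Y.card) :
    IsStatLeinert Y ↔ Infinite (Subgroup.closure (Y : Set G)) := by
  classical
  have hc : (1 : ℝ) < Y.card := by exact_mod_cast hY
  obtain ⟨x0, hx0, hx1⟩ := Finset.exists_mem_ne hY 1
  have : Nonempty (LetL Y) := ⟨⟨(⟨x0, hx0⟩, ⟨1, h1⟩), fun h => hx1 (congrArg Subtype.val h)⟩⟩
  have third : 2 < Y.card → ∀ u v : {x // x ∈ Y}, ∃ w : {x // x ∈ Y}, w ≠ u ∧ w ≠ v := by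
    intro h u v
    have h2 : ({u.1, v.1} : Finset G).card < Y.card := lt_of_le_of_lt Finset.card_le_two h
    obtain ⟨w, hw, hw'⟩ := Finset.exists_mem_notMem_of_card_lt_card h2
    simp only [Finset.mem_insert, Finset.mem_singleton, not_or] at hw'
    exact ⟨⟨w, hw⟩, fun h => hw'.1 (congrArg Subtype.val h), fun h => hw'.2 (congrArg Subtype.val h)⟩
  unfold IsStatLeinert
  refine main_abs (relL Y) (labL Y) (((Y.card : ℝ) - 1) ^ 2) (by
    have : 0 < (Y.card : ℝ) - 1 := by linarith
    positivity) (badValidCount Y) _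
    (fun n => badValid_eq Y (n + 1)) ?_ (fun b => ?_) (fun a => ?_) ?_ ?_ ?_ _ (closL Y h1)
  · intro n
    have := cardL Y
    have e : 2 * (n + 1) - 1 = 2 * n + 1 := by omega
    rw [this, e, pow_succ, pow_mul]
    ring
  · convert inL Y b
  · convert outL Y a
  · intro b
    refine ⟨⟨(b.1.2, b.1.1), b.2.symm⟩, ?_⟩
    simp [labL]
  · intro b
    rw [closL Y h1]
    by_cases hb : b.1.1.1 = 1
    · refine ⟨{a | a.1.1.1 = 1}, ?_, ?_, ?_⟩
      · intro a ha h
        exact a.2 (Subtype.ext ((ha : a.1.1.1 = 1).trans (hb.symm.trans (congrArg Subtype.val h).symm)))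
      · intro a ha a' ha' h
        exact a.2 (Subtype.ext ((ha : a.1.1.1 = 1).trans
          ((ha' : a'.1.1.1 = 1).symm.trans (congrArg Subtype.val h).symm)))
      · rw [Subgroup.closure_le]
        intro x hx
        by_cases h : x = 1
        · rw [h]; exact one_mem _
        · refine Subgroup.subset_closure
            ⟨⟨(⟨1, h1⟩, ⟨x, hx⟩), fun h' => h (congrArg Subtype.val h').symm⟩, rfl, ?_⟩
          simp [labL]
    · refine ⟨{a | a.1.2.1 = 1}, ?_, ?_, ?_⟩
      · intro a ha h
        exact hb ((congrArg Subtype.val h).symm.trans ha)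
      · intro a ha a' ha' h
        exact a'.2 (Subtype.ext ((congrArg Subtype.val h).symm.trans
          ((ha : a.1.2.1 = 1).trans (ha' : a'.1.2.1 = 1).symm)))
      · rw [Subgroup.closure_le]
        intro x hx
        by_cases h : x = 1
        · rw [h]; exact one_mem _
        · rw [SetLike.mem_coe, ← inv_mem_iff]
          refine Subgroup.subset_closure
            ⟨⟨(⟨x, hx⟩, ⟨1, h1⟩), fun h' => h (congrArg Subtype.val h')⟩, rfl, ?_⟩
          simp [labL]
  · by_cases h2 : 2 < Y.card
    · left
      constructor
      · intro a a'
        obtain ⟨z, hz, hz'⟩ := third h2 a.1.2 a'.1.2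
        obtain ⟨w, hw, -⟩ := third h2 z z
        exact ⟨⟨(z, w), hw.symm⟩, hz.symm, hz'.symm⟩
      · intro b b'
        obtain ⟨z, hz, hz'⟩ := third h2 b.1.1 b'.1.1
        obtain ⟨w, hw, -⟩ := third h2 z z
        exact ⟨⟨(w, z), hw⟩, hz, hz'⟩
    · right
      have hcard : Fintype.card {x // x ∈ Y} = 2 := by
        rw [Fintype.card_coe]; omega
      have pig : ∀ u v w : {x // x ∈ Y}, u ≠ v → v ≠ w → u = w := by
        intro u v w h h'
        by_contra h''
        have h3 : ({u, v, w} : Finset {x // x ∈ Y}).card = 3 := Finset.card_eq_three.2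
          ⟨u, v, w, h, h'', h', rfl⟩
        have := Finset.card_le_univ ({u, v, w} : Finset {x // x ∈ Y})
        omega
      constructor
      · intro a b
        unfold relL
        constructor
        · intro h
          have e1 := pig _ _ _ a.2 h
          have e2 := pig _ _ _ h b.2
          exact Subtype.ext (Prod.ext e1 e2)
        · rintro rfl; exact a.2.symm
      · intro a
        rw [closL Y h1, Subgroup.closure_le]
        intro x hx
        by_cases h : x = 1
        · rw [h]; exact one_mem _
        · have hne : (⟨x, hx⟩ : {x // x ∈ Y}) ≠ ⟨1, h1⟩ := fun h' => h (congrArg Subtype.val h')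
          by_cases ha : a.1.1 = ⟨1, h1⟩
          · have : a.1.2 = ⟨x, hx⟩ := pig _ _ _ (ha ▸ a.2.symm) hne.symm
            have e : labL Y a = x := by simp [labL, ha, this]
            rw [e]; exact Subgroup.mem_zpowers x
          · have e1 : a.1.1 = ⟨x, hx⟩ := pig _ _ _ ha hne.symm
            have e2 : a.1.2 = ⟨1, h1⟩ := pig _ _ _ (e1 ▸ a.2.symm) hne
            have e : labL Y a = x⁻¹ := by simp [labL, e1, e2]
            rw [e, Subgroup.zpowers_inv]; exact Subgroup.mem_zpowers x

end
end SLF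

/-- Let `G` be a group with identity `e` and `X ⊆ G` finite with `e ∉ X`.
Then `X` is statistically free iff `X ∪ {e}` is statistically Leinert. -/
theorem statFree_iff_statLeinert {G : Type*} [Group G] [DecidableEq G]
    (X : Finset G) (he : (1 : G) ∉ X) :
    IsStatFree X ↔ IsStatLeinert (insert 1 X) := by
  rcases X.eq_empty_or_nonempty with rfl | hX
  · refine iff_of_true ?_ ?_
    · unfold IsStatFree
      simp
    · unfold IsStatLeinert
      refine (tendsto_add_atTop_iff_nat 1).1 ?_
      have : ∀ n : ℕ, 2 * (n + 1) - 1 ≠ 0 := fun n => by omega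
      simp [this]
  · rw [SLF.free_iff X hX, SLF.leinert_iff (insert 1 X) (Finset.mem_insert_self _ _) (by
      rw [Finset.card_insert_of_notMem he]; have := hX.card_pos; omega)]
    rw [Finset.coe_insert, Subgroup.closure_insert_one]
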